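/- For every s > 0, s·ψ′(s+1) = ∫_0^∞ exp(−r)·ρ(r/s) dr, where ρ(t) := t/(exp(t) − 1) and ψ′ is the trigamma function. -/

import Mathlib

open Real MeasureTheory

/-- The trigamma function `ψ'`, the second derivative of `log Γ`. -/
noncomputable def trigamma : ℝ → ℝ :=
  deriv (deriv (fun x : ℝ => Real.log (Real.Gamma x)))

/-!
Convexity of `log Γ` and `log Γ(x + 1) - log Γ(x) = log x` squeeze `ψ(x)` between `log x - 1/x` and
`log x`. Hence `ψ(x) = lim (log n - ∑_{k < n} 1/(x + k))`, and differentiating this limit gives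
`ψ'(x) = ∑ 1/(x + n)²`. Each term is the Laplace integral `∫ t e^{-(x + n)t} dt`, and summing the
geometric series under the integral sign gives `ψ'(x) = ∫ t e^{-xt}/(1 - e^{-t}) dt`. At `x = s + 1`
this is `∫ e^{-st} ρ(t) dt`, and it remains to substitute `r = st`.
-/

open Filter Set Topology

/-- The digamma function `ψ` on the real line, as the derivative of `log Γ`; Mathlib's
`Complex.digamma` is its complex counterpart. Its derivative is `trigamma` by definition. -/
noncomputable def digamma : ℝ → ℝ :=
  deriv fun x : ℝ => log (Gamma x)

section Digamma

variable {x : ℝ}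

lemma differentiableAt_log_Gamma (hx : 0 < x) :
    DifferentiableAt ℝ (fun y : ℝ => log (Gamma y)) x :=
  (differentiableOn_Gamma_Ioi.differentiableAt (Ioi_mem_nhds hx)).log (Gamma_pos_of_pos hx).ne'

lemma log_Gamma_add_one (hx : 0 < x) : log (Gamma (x + 1)) = log (Gamma x) + log x := by
  rw [Gamma_add_one hx.ne', log_mul hx.ne' (Gamma_pos_of_pos hx).ne', add_comm]

lemma slope_log_Gamma_add_one (hx : 0 < x) :
    slope (fun y : ℝ => log (Gamma y)) x (x + 1) = log x := by
  simp [slope_def_field, log_Gamma_add_one hx]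

lemma digamma_add_one (hx : 0 < x) : digamma (x + 1) = digamma x + 1 / x := by
  have functional_eq : (fun y => log (Gamma (y + 1))) =ᶠ[𝓝 x] fun y => log (Gamma y) + log y := by
    filter_upwards [Ioi_mem_nhds hx] with y hy using log_Gamma_add_one hy
  calc digamma (x + 1) = deriv (fun y => log (Gamma (y + 1))) x :=
        (deriv_comp_add_const _ 1 x).symm
    _ = deriv (fun y => log (Gamma y) + log y) x := functional_eq.deriv_eq
    _ = digamma x + 1 / x := by
        rw [deriv_fun_add (differentiableAt_log_Gamma hx) (differentiableAt_log hx.ne'), deriv_log,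
          one_div, digamma]

lemma digamma_add_nat (hx : 0 < x) (n : ℕ) :
    digamma (x + n) = digamma x + ∑ k ∈ Finset.range n, 1 / (x + k) := by
  induction n with
  | zero => simp
  | succ n ih =>
    rw [Finset.sum_range_succ, ← add_assoc, ← ih, ← digamma_add_one (by positivity), Nat.cast_succ,
      add_assoc]

lemma digamma_le_log (hx : 0 < x) : digamma x ≤ log x :=
  slope_log_Gamma_add_one hx ▸ convexOn_log_Gamma.deriv_le_slope hx
    (add_pos hx one_pos : 0 < x + 1) (lt_add_one x) (differentiableAt_log_Gamma hx)

lemma log_le_digamma_add_one (hx : 0 < x) : log x ≤ digamma (x + 1) :=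
  have hx' : 0 < x + 1 := add_pos hx one_pos
  slope_log_Gamma_add_one hx ▸ convexOn_log_Gamma.slope_le_deriv hx hx' (lt_add_one x)
    (differentiableAt_log_Gamma hx')

lemma tendsto_digamma_sub_log : Tendsto (fun x => digamma x - log x) atTop (𝓝 0) := by
  have lower : Tendsto (fun x : ℝ => -(1 / x)) atTop (𝓝 0) := by
    simpa using (tendsto_inv_atTop_zero (𝕜 := ℝ)).neg
  refine tendsto_of_tendsto_of_tendsto_of_le_of_le' lower tendsto_const_nhds ?_ ?_
  · filter_upwards [eventually_gt_atTop 0] with x hx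
    linarith [log_le_digamma_add_one hx, digamma_add_one hx]
  · filter_upwards [eventually_gt_atTop 0] with x hx
    linarith [digamma_le_log hx]

lemma tendsto_log_sub_sum_digamma (hx : 0 < x) :
    Tendsto (fun n : ℕ => log n - ∑ k ∈ Finset.range n, 1 / (x + k)) atTop (𝓝 (digamma x)) := by
  have shifted : Tendsto (fun n : ℕ => digamma (n + x) - log (n + x)) atTop (𝓝 0) :=
    tendsto_digamma_sub_log.comp (tendsto_natCast_atTop_atTop.atTop_add tendsto_const_nhds)
  have log_shift : Tendsto (fun n : ℕ => log (n + x) - log n) atTop (𝓝 0) :=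
    (tendsto_log_comp_add_sub_log x).comp tendsto_natCast_atTop_atTop
  have limit := (shifted.add log_shift).const_sub (digamma x)
  rw [add_zero, sub_zero] at limit
  refine limit.congr fun n => ?_
  rw [add_comm (n : ℝ) x, digamma_add_nat hx]
  ring

end Digamma

section Trigamma

variable {a x t : ℝ}

lemma summable_one_div_add_nat_rpow (ha : 1 < a) (hx : 0 < x) :
    Summable fun n : ℕ => (1 / (x + n)) ^ a := by
  refine ((summable_one_div_nat_add_rpow x a).2 ha).congr fun n => ?_
  have hpos : 0 < x + n := by positivity
  rw [add_comm (n : ℝ), abs_of_pos hpos, div_rpow zero_le_one hpos.le, one_rpow]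

lemma summable_one_div_add_nat_sq (hx : 0 < x) : Summable fun n : ℕ => (1 / (x + n)) ^ 2 := by
  simpa only [rpow_two] using summable_one_div_add_nat_rpow one_lt_two hx

lemma tendstoUniformlyOn_sum_one_div_add_nat_sq (hx : 0 < x) :
    TendstoUniformlyOn (fun (N : ℕ) (y : ℝ) => ∑ n ∈ Finset.range N, (1 / (y + n)) ^ 2)
      (fun y => ∑' n : ℕ, (1 / (y + n)) ^ 2) atTop (Ioi x) := by
  refine tendstoUniformlyOn_tsum_nat (summable_one_div_add_nat_sq hx) fun n y hy => ?_
  have hxy : x < y := hy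
  have hy0 : 0 < y := hx.trans hxy
  rw [norm_of_nonneg (by positivity)]
  gcongr

lemma hasDerivAt_neg_one_div_add {c : ℝ} (hx : x + c ≠ 0) :
    HasDerivAt (fun y => -(1 / (y + c))) ((1 / (x + c)) ^ 2) x := by
  simpa [neg_div] using (((hasDerivAt_id x).add_const c).fun_inv hx).fun_neg

lemma hasDerivAt_digamma (hx : 0 < x) :
    HasDerivAt digamma (∑' n : ℕ, (1 / (x + n)) ^ 2) x := by
  have hderiv (N : ℕ) (y : ℝ) (hy : 0 < y) :
      HasDerivAt (fun z : ℝ => log N - ∑ n ∈ Finset.range N, 1 / (z + n))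
        (∑ n ∈ Finset.range N, (1 / (y + n)) ^ 2) y := by
    simpa only [Finset.sum_neg_distrib, ← sub_eq_add_neg] using
      (HasDerivAt.fun_sum fun n (_ : n ∈ Finset.range N) =>
        hasDerivAt_neg_one_div_add (x := y) (c := n) (by positivity)).const_add (log N)
  have hpos {y : ℝ} (hy : y ∈ Ioi (x / 2)) : 0 < y := (half_pos hx).trans hy
  exact hasDerivAt_of_tendstoUniformlyOn isOpen_Ioi
    (tendstoUniformlyOn_sum_one_div_add_nat_sq (half_pos hx))
    (.of_forall fun N y hy => hderiv N y (hpos hy))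
    (fun y hy => tendsto_log_sub_sum_digamma (hpos hy)) (half_lt_self hx)

lemma trigamma_eq_tsum (hx : 0 < x) : trigamma x = ∑' n : ℕ, (1 / (x + n)) ^ 2 :=
  (hasDerivAt_digamma hx).deriv

lemma hasSum_exp_neg_add_nat_mul (x : ℝ) (ht : 0 < t) :
    HasSum (fun n : ℕ => exp (-((x + n) * t))) (exp (-(x * t)) / (1 - exp (-t))) := by
  have geometric := (hasSum_geometric_of_lt_one (exp_nonneg (-t))
    (exp_lt_one_iff.2 (neg_neg_of_pos ht))).mul_left (exp (-(x * t)))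
  refine geometric.congr_fun fun n => ?_
  rw [← exp_nat_mul, ← exp_add]
  ring_nf

lemma hasSum_integral_rpow_mul_exp_neg_mul_div (ha : 1 < a) (hx : 0 < x) :
    HasSum (fun n : ℕ => (1 / (x + n)) ^ a * Gamma a)
      (∫ t in Ioi 0, t ^ (a - 1) * (exp (-(x * t)) / (1 - exp (-t)))) := by
  have ha0 : 0 < a := one_pos.trans ha
  let F (n : ℕ) (t : ℝ) : ℝ := t ^ (a - 1) * exp (-((x + n) * t))
  have integral_F (n : ℕ) : ∫ t in Ioi 0, F n t = (1 / (x + n)) ^ a * Gamma a :=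
    integral_rpow_mul_exp_neg_mul_Ioi ha0 (by positivity)
  have integrable_F (n : ℕ) : IntegrableOn (F n) (Ioi 0) := by
    refine .of_integral_ne_zero ?_
    rw [integral_F]
    have := Gamma_pos_of_pos ha0
    positivity
  have integral_norm_F (n : ℕ) : ∫ t in Ioi 0, ‖F n t‖ = (1 / (x + n)) ^ a * Gamma a := by
    rw [← integral_F]
    refine setIntegral_congr_fun measurableSet_Ioi fun t (ht : 0 < t) => ?_
    exact norm_of_nonneg (by positivity)
  have tsum_F : ∀ t ∈ Ioi (0 : ℝ),
      ∑' n, F n t = t ^ (a - 1) * (exp (-(x * t)) / (1 - exp (-t))) := fun t ht =>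
    ((hasSum_exp_neg_add_nat_mul x ht).mul_left _).tsum_eq
  have summable_norm : Summable fun n => ∫ t in Ioi 0, ‖F n t‖ := by
    simpa only [integral_norm_F] using (summable_one_div_add_nat_rpow ha hx).mul_right (Gamma a)
  simpa only [integral_F, setIntegral_congr_fun measurableSet_Ioi tsum_F] using
    hasSum_integral_of_summable_integral_norm integrable_F summable_norm

lemma trigamma_eq_integral (hx : 0 < x) :
    trigamma x = ∫ t in Ioi 0, t * (exp (-(x * t)) / (1 - exp (-t))) := by
  have two_sub_one : (2 : ℝ) - 1 = 1 := by norm_num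
  simpa only [two_sub_one, rpow_one, rpow_two, Gamma_two, mul_one, ← trigamma_eq_tsum hx] using
    (hasSum_integral_rpow_mul_exp_neg_mul_div one_lt_two hx).tsum_eq

lemma exp_neg_add_one_mul_div_one_sub_exp_neg (x t : ℝ) :
    exp (-((x + 1) * t)) / (1 - exp (-t)) = exp (-(x * t)) / (exp t - 1) := by
  have numerator : exp (-((x + 1) * t)) = exp (-t) * exp (-(x * t)) := by
    rw [← exp_add]
    ring_nf
  have denominator : 1 - exp (-t) = exp (-t) * (exp t - 1) := by
    rw [mul_sub, ← exp_add, neg_add_cancel, exp_zero, mul_one]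
  rw [numerator, denominator, mul_div_mul_left _ _ (exp_ne_zero _)]

lemma trigamma_add_one_eq_integral (hx : -1 < x) :
    trigamma (x + 1) = ∫ t in Ioi 0, exp (-(x * t)) * (t / (exp t - 1)) := by
  simp_rw [trigamma_eq_integral (neg_lt_iff_pos_add.1 hx),
    exp_neg_add_one_mul_div_one_sub_exp_neg, mul_div_left_comm]

end Trigamma

/-- For every `s > 0`, `s · ψ'(s+1) = ∫_0^∞ exp(-r) ρ(r/s) dr` where
`ρ(t) = t / (exp t - 1)`. -/
theorem mul_trigamma_eq_integral (s : ℝ) (hs : 0 < s) :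
    s * trigamma (s + 1)
      = ∫ r in Set.Ioi (0 : ℝ),
          Real.exp (-r) * ((r / s) / (Real.exp (r / s) - 1)) := by
  have substitution := integral_comp_mul_left_Ioi'
    (fun r => exp (-r) * ((r / s) / (exp (r / s) - 1))) 0 hs
  simp only [mul_zero, mul_div_cancel_left₀ _ hs.ne', smul_eq_mul] at substitution
  rw [trigamma_add_one_eq_integral (by linarith), substitution]
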